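/- arXiv:1406.6851 — 2 statements merged into one kernel-verified Lean document; each statement's English description precedes it below -/
import Mathlib

section
/- The set of 34 congruences with (residue, modulus) pairs {(1,2),(0,4),(2,8),(0,11),(2,13),(6,16),(20,22),(20,26),(30,32),(34,44),(6,52),(46,64),(14,88),(38,104),(14,128),(138,143),(62,176),(30,208),(78,256),(94,286),(142,352),(206,416),(226,572),(654,704),(14,832),(1062,1144),(206,1408),(78,1664),(1214,2288),(2510,2816),(2766,3328),(334,4576),(4558,9152),(7374,18304)} is a covering system of the integers; hence L = 2^8 · 11 · 13 is a covering number. -/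
/-- A finite set of congruences `(x, m)` covers all the integers. -/
def CoversAll (S : Finset (ℕ × ℕ)) : Prop :=
  ∀ z : ℤ, ∃ c ∈ S, (c.2 : ℤ) ∣ z - (c.1 : ℤ)

/-- The moduli appearing in `S` are pairwise distinct. -/
def DistinctModuli (S : Finset (ℕ × ℕ)) : Prop :=
  ∀ c ∈ S, ∀ c' ∈ S, c.2 = c'.2 → c = c'

/-- `L` is a covering number: there is a covering system whose moduli are
distinct divisors of `L` greater than `1`. -/
def IsCoveringNumber (L : ℕ) : Prop :=
  ∃ S : Finset (ℕ × ℕ), CoversAll S ∧ DistinctModuli S ∧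
    ∀ c ∈ S, 1 < c.2 ∧ c.2 ∣ L

/-- `L` is a primitive covering number. -/
def IsPrimitiveCoveringNumber (L : ℕ) : Prop :=
  IsCoveringNumber L ∧ ∀ d : ℕ, d ∣ L → d ≠ L → ¬ IsCoveringNumber d

/-- A system of congruences whose moduli divide `a * b` covers the integers as soon as every residue
`i` modulo `a` is either covered by a congruence with modulus dividing `a`, or has all of its lifts
`i + a * j` modulo `a * b` covered. -/
theorem coversAll_toFinset_of_forall_lt {l : List (ℕ × ℕ)} {a b : ℕ} (ha : 0 < a) (hb : 0 < b)
    (hdvd : ∀ c ∈ l, c.2 ∣ a * b)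
    (hcov : ∀ i < a, (∃ c ∈ l, c.2 ∣ a ∧ i % c.2 = c.1) ∨
      ∀ j < b, ∃ c ∈ l, (i + a * j) % c.2 = c.1) :
    CoversAll l.toFinset := by
  intro z
  have hab : (0 : ℤ) < (a * b : ℕ) := by exact_mod_cast Nat.mul_pos ha hb
  obtain ⟨n, hn⟩ := Int.eq_ofNat_of_zero_le (Int.emod_nonneg z hab.ne')
  have hlt : n < a * b := by exact_mod_cast hn ▸ Int.emod_lt_of_pos z hab
  obtain ⟨c, hcl, hmod⟩ : ∃ c ∈ l, n % c.2 = c.1 := by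
    rcases hcov (n % a) (Nat.mod_lt n ha) with ⟨c, hcl, hca, hmod⟩ | h
    · exact ⟨c, hcl, Nat.mod_mod_of_dvd n hca ▸ hmod⟩
    · simpa only [Nat.mod_add_div] using h (n / a) (Nat.div_lt_of_lt_mul hlt)
  refine ⟨c, List.mem_toFinset.mpr hcl, ?_⟩
  have hz : (c.2 : ℤ) ∣ z - n :=
    (Int.natCast_dvd_natCast.mpr (hdvd c hcl)).trans (hn ▸ Int.dvd_self_sub_emod)
  have hr : (c.2 : ℤ) ∣ (n : ℤ) - c.1 := by
    rw [← hmod, Int.natCast_mod]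
    exact Int.dvd_self_sub_emod
  simpa using hz.add hr

/-- The congruences of a covering system with moduli dividing `36608`. -/
def congruences36608 : List (ℕ × ℕ) :=
  [(1,2),(0,4),(2,8),(0,11),(2,13),(6,16),(20,22),(20,26),(30,32),
    (34,44),(6,52),(46,64),(14,88),(38,104),(14,128),(138,143),(62,176),
    (30,208),(78,256),(94,286),(142,352),(206,416),(226,572),(654,704),
    (14,832),(1062,1144),(206,1408),(78,1664),(1214,2288),(2510,2816),
    (2766,3328),(334,4576),(4558,9152),(7374,18304)]

theorem coversAll_congruences36608 : CoversAll congruences36608.toFinset :=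
  coversAll_toFinset_of_forall_lt (a := 2 ^ 8) (b := 11 * 13) (by norm_num) (by norm_num)
    (by decide +kernel) (by decide +kernel)

theorem distinctModuli_congruences36608 : DistinctModuli congruences36608.toFinset := by
  have h : ∀ c ∈ congruences36608, ∀ c' ∈ congruences36608, c.2 = c'.2 → c = c' := by
    decide +kernel
  simpa only [DistinctModuli, List.mem_toFinset] using h

theorem isCoveringNumber_36608 : IsCoveringNumber (2 ^ 8 * 11 * 13) := by
  have h : ∀ c ∈ congruences36608, 1 < c.2 ∧ c.2 ∣ 2 ^ 8 * 11 * 13 := by decide +kernel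
  exact ⟨congruences36608.toFinset, coversAll_congruences36608, distinctModuli_congruences36608,
    fun c hc => h c (List.mem_toFinset.mp hc)⟩

theorem covering_for_36608 :
    CoversAll ({(1,2),(0,4),(2,8),(0,11),(2,13),(6,16),(20,22),(20,26),(30,32),
      (34,44),(6,52),(46,64),(14,88),(38,104),(14,128),(138,143),(62,176),
      (30,208),(78,256),(94,286),(142,352),(206,416),(226,572),(654,704),
      (14,832),(1062,1144),(206,1408),(78,1664),(1214,2288),(2510,2816),
      (2766,3328),(334,4576),(4558,9152),(7374,18304)} : Finset (ℕ × ℕ)) ∧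
    IsCoveringNumber (2 ^ 8 * 11 * 13) := by
  refine ⟨?_, isCoveringNumber_36608⟩
  simpa only [congruences36608, List.toFinset_cons, List.toFinset_nil, insert_empty_eq] using
    coversAll_congruences36608
end

section
/- Let M = {2, 4, 5, 8, 10, 16, 20, 40, 80} (all divisors greater than 1 of 80). Then the number of covering systems of the integers whose set of moduli is exactly M equals (2!)^4 · 5! = 1920. -/
/-- The moduli: all divisors of `80` greater than `1`. -/
def moduli80 : Finset ℕ := {2, 4, 5, 8, 10, 16, 20, 40, 80}

/-- The residue modulo `m` in the covering attached to a class `a` modulo `16`, left uncovered by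
the moduli that are powers of two, and a permutation `σ` distributing the classes modulo `5`. -/
def residue80 (p : Fin 16 × Equiv.Perm (Fin 5)) (m : ℕ) : ℕ :=
  if 5 ∣ m then (16 * (p.2 (Fin.ofNat 5 (Nat.log 2 (m / 5)))).val + 65 * p.1.val) % m
  else (p.1.val + m / 2) % m

/-- The system of congruences with moduli in `moduli80` and residues `r`. -/
def congruences80 (r : ℕ → ℕ) : Finset (ℕ × ℕ) :=
  moduli80.image fun m => (r m, m)

lemma exists_congruences80_eq {S : Finset (ℕ × ℕ)} (hS : DistinctModuli S)
    (hM : S.image Prod.snd = moduli80) : ∃ r, S = congruences80 r := by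
  have h : ∀ m, ∃ r, m ∈ moduli80 → (r, m) ∈ S := by
    intro m
    by_cases hm : m ∈ moduli80
    · rw [← hM, Finset.mem_image] at hm
      obtain ⟨c, hc, rfl⟩ := hm
      exact ⟨c.1, fun _ => hc⟩
    · exact ⟨0, fun h => absurd h hm⟩
  choose r hr using h
  refine ⟨r, ?_⟩
  ext c
  simp only [congruences80, Finset.mem_image]
  constructor
  · intro hc
    have hm : c.2 ∈ moduli80 := hM ▸ Finset.mem_image_of_mem _ hc
    exact ⟨c.2, hm, hS _ (hr _ hm) _ hc rfl⟩
  · rintro ⟨m, hm, rfl⟩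
    exact hr m hm

lemma congruences80_inj {r s : ℕ → ℕ} :
    congruences80 r = congruences80 s ↔ ∀ m ∈ moduli80, r m = s m := by
  constructor
  · intro h m hm
    have h1 : (r m, m) ∈ congruences80 s := h ▸ Finset.mem_image_of_mem _ hm
    obtain ⟨m', -, h2⟩ := Finset.mem_image.1 h1
    obtain ⟨h3, rfl⟩ := Prod.mk.inj h2
    exact h3.symm
  · intro h
    exact Finset.image_congr fun m hm => by simp [h m hm]

lemma distinctModuli_congruences80 (r : ℕ → ℕ) : DistinctModuli (congruences80 r) := by
  intro c hc c' hc' h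
  simp only [congruences80, Finset.mem_image] at hc hc'
  obtain ⟨m, -, rfl⟩ := hc
  obtain ⟨m', -, rfl⟩ := hc'
  obtain rfl : m = m' := h
  rfl

lemma image_snd_congruences80 (r : ℕ → ℕ) : (congruences80 r).image Prod.snd = moduli80 := by
  simp [congruences80, Finset.image_image, Function.comp_def]

lemma coversAll_congruences80_iff (r : ℕ → ℕ) :
    CoversAll (congruences80 r) ↔ ∀ z : ℤ, ∃ m ∈ moduli80, (m : ℤ) ∣ z - r m := by
  simp [CoversAll, congruences80]

lemma residue80_two_pow_mul_five (a : Fin 16) (σ : Equiv.Perm (Fin 5)) (j : Fin 5) :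
    residue80 (a, σ) (5 * 2 ^ j.val) = (16 * (σ j).val + 65 * a.val) % (5 * 2 ^ j.val) := by
  have h : Nat.log 2 (5 * 2 ^ j.val / 5) = j.val := by
    rw [Nat.mul_div_cancel_left _ (by norm_num), Nat.log_pow (by norm_num)]
  rw [residue80, if_pos (Dvd.intro _ rfl), h]
  simp

lemma five_mul_two_pow_mem_moduli80 (j : Fin 5) : 5 * 2 ^ j.val ∈ moduli80 := by
  revert j
  decide

lemma forall_mem_moduli80 {P : ℕ → Prop} :
    (∀ m ∈ moduli80, P m) ↔
      (P 2 ∧ P 4 ∧ P 8 ∧ P 16) ∧ ∀ j : Fin 5, P (5 * 2 ^ j.val) := by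
  simp [moduli80, Fin.forall_fin_succ]
  tauto

lemma exists_mem_moduli80 {P : ℕ → Prop} :
    (∃ m ∈ moduli80, P m) ↔
      (P 2 ∨ P 4 ∨ P 8 ∨ P 16) ∨ ∃ j : Fin 5, P (5 * 2 ^ j.val) := by
  simp [moduli80, Fin.exists_fin_succ]
  tauto

lemma residue80_injective :
    Function.Injective fun p => congruences80 (residue80 p) := by
  rintro ⟨a, σ⟩ ⟨b, τ⟩ h
  have h1 (j : Fin 5) := congruences80_inj.1 h _ (five_mul_two_pow_mem_moduli80 j)
  simp only [residue80_two_pow_mul_five] at h1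
  obtain rfl : a = b := by
    have := h1 4
    ext
    simp at this
    omega
  have : σ = τ := by
    ext j
    have h2 : _ % 5 = _ % 5 := congrArg (· % 5) (h1 j)
    rw [Nat.mod_mul_right_mod, Nat.mod_mul_right_mod] at h2
    omega
  rw [this]

lemma coversAll_residue80 (p : Fin 16 × Equiv.Perm (Fin 5)) :
    CoversAll (congruences80 (residue80 p)) := by
  obtain ⟨a, σ⟩ := p
  rw [coversAll_congruences80_iff]
  intro z
  rw [exists_mem_moduli80]
  by_cases hz : z % 16 = a.val
  · right
    obtain ⟨k, hk⟩ : ∃ k : Fin 5, (k.val : ℤ) = z % 5 := ⟨⟨(z % 5).toNat, by omega⟩, by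
      simp; omega⟩
    refine ⟨σ.symm k, ?_⟩
    rw [residue80_two_pow_mul_five, Equiv.apply_symm_apply]
    have h80 : (80 : ℤ) ∣ z - (16 * k.val + 65 * a.val : ℕ) := by omega
    have hd : ((5 * 2 ^ (σ.symm k).val : ℕ) : ℤ) ∣ 80 := by
      generalize σ.symm k = j
      revert j
      decide
    have h1 := hd.trans h80
    push_cast at h1 ⊢
    rw [Int.dvd_iff_emod_eq_zero] at h1 ⊢
    simpa [Int.sub_emod] using h1
  · left
    have := a.isLt
    simp [residue80]
    omega

lemma exists_uncovered_mod_sixteen :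
    ∀ (r₂ : Fin 2) (r₄ : Fin 4) (r₈ : Fin 8) (r₁₆ : Fin 16), ∃ a : Fin 16,
      a.val % 2 ≠ r₂.val ∧ a.val % 4 ≠ r₄.val ∧ a.val % 8 ≠ r₈.val ∧ a.val ≠ r₁₆.val := by
  decide +kernel

lemma residues_eq_of_unique_uncovered {r₂ r₄ r₈ r₁₆ a : ℕ}
    (h₂ : r₂ < 2) (h₄ : r₄ < 4) (h₈ : r₈ < 8)
    (ha₂ : a % 2 ≠ r₂) (ha₄ : a % 4 ≠ r₄) (ha₈ : a % 8 ≠ r₈)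
    (h : ∀ u < 16, u % 2 = r₂ ∨ u % 4 = r₄ ∨ u % 8 = r₈ ∨ u = r₁₆ ∨ u = a) :
    r₂ = (a + 1) % 2 ∧ r₄ = (a + 2) % 4 ∧ r₈ = (a + 4) % 8 ∧ r₁₆ = (a + 8) % 16 := by
  have shift (d : ℕ) := h ((a + d) % 16) (Nat.mod_lt _ (by norm_num))
  have e₂ : r₂ = (a + 1) % 2 := by omega
  have e₄ : r₄ = (a + 2) % 4 := by
    have := shift 2
    have := shift 6
    have := shift 10
    have := shift 14
    omega
  have e₈ : r₈ = (a + 4) % 8 := by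
    have := shift 4
    have := shift 12
    omega
  have e₁₆ : r₁₆ = (a + 8) % 16 := by
    have := shift 8
    omega
  exact ⟨e₂, e₄, e₈, e₁₆⟩

lemma exists_perm_of_uncovered {r : ℕ → ℕ} (hc : CoversAll (congruences80 r)) {u : ℕ}
    (hr : ∀ m ∈ moduli80, r m < m)
    (h₂ : u % 2 ≠ r 2) (h₄ : u % 4 ≠ r 4) (h₈ : u % 8 ≠ r 8) (h₁₆ : u % 16 ≠ r 16) :
    ∃ σ : Equiv.Perm (Fin 5), ∀ j : Fin 5,
      r (5 * 2 ^ j.val) = (16 * (σ j).val + 65 * u) % (5 * 2 ^ j.val) := by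
  rw [coversAll_congruences80_iff] at hc
  have hr' := forall_mem_moduli80.1 hr
  have h : ∀ k : Fin 5, ∃ j : Fin 5,
      r (5 * 2 ^ j.val) = (16 * k.val + 65 * u) % (5 * 2 ^ j.val) := by
    intro k
    rcases exists_mem_moduli80.1 (hc (16 * k.val + 65 * u : ℕ)) with h | ⟨j, hj⟩
    · omega
    · refine ⟨j, ?_⟩
      rw [← Nat.modEq_iff_dvd.2 hj, Nat.mod_eq_of_lt (hr'.2 j)]
  choose f hf using h
  have hinj : Function.Injective f := by
    intro k l hkl
    have h1 := hf k
    rw [hkl, hf l] at h1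
    have h2 : _ % 5 = _ % 5 := congrArg (· % 5) h1
    rw [Nat.mod_mul_right_mod, Nat.mod_mul_right_mod] at h2
    omega
  let e := Equiv.ofBijective f (Finite.injective_iff_bijective.1 hinj)
  refine ⟨e.symm, fun j => ?_⟩
  have h1 := hf (e.symm j)
  rwa [show f (e.symm j) = j from e.apply_symm_apply j] at h1

lemma exists_residue80_eq {r : ℕ → ℕ} (hc : CoversAll (congruences80 r))
    (hr : ∀ m ∈ moduli80, r m < m) : ∃ p, congruences80 (residue80 p) = congruences80 r := by
  obtain ⟨⟨h₂, h₄, h₈, h₁₆⟩, -⟩ := forall_mem_moduli80.1 hr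
  obtain ⟨⟨a, ha⟩, ha₂, ha₄, ha₈, ha₁₆⟩ :=
    exists_uncovered_mod_sixteen ⟨r 2, h₂⟩ ⟨r 4, h₄⟩ ⟨r 8, h₈⟩ ⟨r 16, h₁₆⟩
  dsimp only at ha₂ ha₄ ha₈ ha₁₆
  obtain ⟨σ, hσ⟩ := exists_perm_of_uncovered hc hr ha₂ ha₄ ha₈ (by omega)
  have huniq : ∀ u < 16, u % 2 = r 2 ∨ u % 4 = r 4 ∨ u % 8 = r 8 ∨ u = r 16 ∨ u = a := by
    intro u hu
    by_contra! ⟨hu₂, hu₄, hu₈, hu₁₆, hua⟩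
    obtain ⟨τ, hτ⟩ := exists_perm_of_uncovered hc hr hu₂ hu₄ hu₈ (by omega)
    have h1 := (hτ 4).symm.trans (hσ 4)
    simp at h1
    omega
  have h := residues_eq_of_unique_uncovered h₂ h₄ h₈ ha₂ ha₄ ha₈ huniq
  refine ⟨(⟨a, ha⟩, σ), congruences80_inj.2 (forall_mem_moduli80.2 ⟨?_, fun j => ?_⟩)⟩
  · simp [residue80]
    omega
  · rw [residue80_two_pow_mul_five, hσ]

lemma residue80_lt (p : Fin 16 × Equiv.Perm (Fin 5)) {m : ℕ} (hm : m ∈ moduli80) :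
    residue80 p m < m := by
  have h0 : 0 < m := by
    revert m
    decide
  unfold residue80
  split_ifs <;> exact Nat.mod_lt _ h0

theorem number_of_coverings_with_moduli_of_80 :
    {S : Finset (ℕ × ℕ) | CoversAll S ∧ DistinctModuli S ∧
      (∀ c ∈ S, c.1 < c.2) ∧
      S.image Prod.snd = ({2, 4, 5, 8, 10, 16, 20, 40, 80} : Finset ℕ)}.ncard =
      1920 := by
  have h : {S : Finset (ℕ × ℕ) | CoversAll S ∧ DistinctModuli S ∧
      (∀ c ∈ S, c.1 < c.2) ∧
      S.image Prod.snd = ({2, 4, 5, 8, 10, 16, 20, 40, 80} : Finset ℕ)} =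
      Set.range fun p => congruences80 (residue80 p) := by
    ext S
    constructor
    · rintro ⟨hc, hd, hlt, hM⟩
      obtain ⟨r, rfl⟩ := exists_congruences80_eq hd hM
      exact exists_residue80_eq hc fun m hm => hlt _ (Finset.mem_image_of_mem _ hm)
    · rintro ⟨p, rfl⟩
      refine ⟨coversAll_residue80 p, distinctModuli_congruences80 _, ?_,
        image_snd_congruences80 _⟩
      intro c hc
      obtain ⟨m, hm, rfl⟩ := Finset.mem_image.1 hc
      exact residue80_lt p hm
  rw [h, ← Set.image_univ, Set.ncard_image_of_injective _ residue80_injective, Set.ncard_univ,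
    Nat.card_prod, Nat.card_perm, Nat.card_fin, Nat.card_fin]
  rfl
end
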